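/- arXiv:math/0104011 — 2 statements merged into one kernel-verified Lean document; each statement's English description precedes it below -/
import Mathlib

section
/- For every positive integer m there exist a 2^m × 2^m matrix M with non-negative integer entries and vectors u, w ∈ ℕ^{2^m} such that T(m,n) = uᵀ M^{n−1} w for every n ≥ 1. (The transfer-matrix representation of the domino-tiling counts of m-by-n rectangles.) -/
open Finset

/-- The m-by-n grid graph on `Fin m × Fin n`: vertices are adjacent iff they agree in
one coordinate and differ by exactly 1 in the other. -/
def grid (m n : ℕ) : SimpleGraph (Fin m × Fin n) :=
  SimpleGraph.fromRel (fun p q =>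
    (p.1 = q.1 ∧ (p.2 : ℕ) + 1 = q.2) ∨ (p.2 = q.2 ∧ (p.1 : ℕ) + 1 = q.1))

/-- A perfect matching: a set of edges of `G` such that every vertex belongs to
exactly one edge of the set. -/
def IsPM {V : Type*} (G : SimpleGraph V) (P : Finset (Sym2 V)) : Prop :=
  (∀ e ∈ P, e ∈ G.edgeSet) ∧ ∀ v : V, ∃! e, e ∈ P ∧ v ∈ e

/-- `T m n` is the number of perfect matchings of the m-by-n grid graph. -/
noncomputable def T (m n : ℕ) : ℕ :=
  {P : Finset (Sym2 (Fin m × Fin n)) | IsPM (grid m n) P}.ncard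

/-!
Cut a perfect matching of `G □ pathGraph n` into its `n` layers. Recording the edges inside each
layer and the set of vertices matched across each gap between consecutive layers loses nothing, and
being a perfect matching becomes a condition on each layer separately: every vertex is matched
backwards, forwards or inside the layer, in exactly one way. So perfect matchings are the labelled
walks of length `n` from `∅` to `∅` on the subsets of the vertex set of `G`, and these are counted
by an entry of the `n`-th power of the matrix of single steps. The grid is the case where `G` is a
path.
-/

open SimpleGraph

theorem ncard_eq_indicator_one_of_subsingleton {α β : Type*} {s : Set α} {t : Set β} {b : β}
    (hs : s.Subsingleton) (hst : s.Nonempty ↔ b ∈ t) : s.ncard = t.indicator 1 b := by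
  by_cases hb : b ∈ t
  · obtain ⟨a, ha⟩ := hst.2 hb
    simp [hs.eq_singleton_of_mem ha, hb]
  · simp [Set.not_nonempty_iff_eq_empty.1 (mt hst.1 hb), hb]

theorem pathGraph_adj_iff_succ_eq_castSucc {n : ℕ} {i j : Fin n} :
    (pathGraph n).Adj i j ↔ i.succ = j.castSucc ∨ j.succ = i.castSucc := by
  simp only [pathGraph_adj, Fin.ext_iff, Fin.val_succ, Fin.val_castSucc]

section LabelledWalk

variable {ι ρ : Type*}

/-- A walk of length `n` from `a` to `b` whose steps carry labels in `ρ`, where `step c r d` says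
that `r` labels a step from `c` to `d`. -/
@[ext]
structure LabelledWalk (step : ι → ρ → ι → Prop) (n : ℕ) (a b : ι) where
  state : Fin (n + 1) → ι
  label : Fin n → ρ
  state_zero : state 0 = a
  state_last : state (Fin.last n) = b
  step_label : ∀ j, step (state j.castSucc) (label j) (state j.succ)

/-- The matrix whose entry at `(a, b)` is the number of labels of steps from `a` to `b`. -/
noncomputable def stepMatrix (step : ι → ρ → ι → Prop) : Matrix ι ι ℕ :=
  Matrix.of fun a b => Nat.card {r // step a r b}

namespace LabelledWalk

instance [Finite ι] [Finite ρ] (step : ι → ρ → ι → Prop) (n : ℕ) (a b : ι) :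
    Finite (LabelledWalk step n a b) :=
  Finite.of_injective (fun x => (x.state, x.label)) fun _ _ h =>
    LabelledWalk.ext (congrArg Prod.fst h) (congrArg Prod.snd h)

theorem card_zero [DecidableEq ι] (step : ι → ρ → ι → Prop) (a b : ι) :
    Nat.card (LabelledWalk step 0 a b) = if a = b then 1 else 0 := by
  split_ifs with hab
  · subst hab
    refine Nat.card_eq_one_iff_exists.2 ⟨⟨fun _ => a, Fin.elim0, rfl, rfl, Fin.rec0⟩, fun x => ?_⟩
    exact LabelledWalk.ext (funext fun j => Fin.fin_one_eq_zero j ▸ x.state_zero) (funext Fin.rec0)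
  · have : IsEmpty (LabelledWalk step 0 a b) :=
      ⟨fun x => hab (x.state_zero.symm.trans x.state_last)⟩
    exact Nat.card_of_isEmpty

theorem step_label_zero {step : ι → ρ → ι → Prop} {n : ℕ} {a b : ι}
    (x : LabelledWalk step (n + 1) a b) : step a (x.label 0) (x.state 1) := by
  obtain ⟨c, r, rfl, -, hstep⟩ := x
  exact hstep 0

/-- Splitting off the first step of a walk. -/
def succEquiv (step : ι → ρ → ι → Prop) (n : ℕ) (a b : ι) :
    LabelledWalk step (n + 1) a b ≃ Σ c, {r // step a r c} × LabelledWalk step n c b where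
  toFun x := ⟨x.state 1, ⟨x.label 0, x.step_label_zero⟩,
    ⟨Fin.tail x.state, Fin.tail x.label, rfl, x.state_last, fun j => x.step_label j.succ⟩⟩
  invFun := fun ⟨_, r, x⟩ => ⟨Fin.cons a x.state, Fin.cons r.1 x.label, rfl, x.state_last,
    Fin.cases (by simpa [x.state_zero] using r.2) x.step_label⟩
  left_inv x := by
    obtain ⟨c, r, rfl, -, -⟩ := x
    exact LabelledWalk.ext (Fin.cons_self_tail c) (Fin.cons_self_tail r)
  right_inv := by
    rintro ⟨_, _, ⟨_, _, rfl, -, -⟩⟩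
    rfl

end LabelledWalk

theorem stepMatrix_pow_apply [Fintype ι] [DecidableEq ι] [Finite ρ] (step : ι → ρ → ι → Prop)
    (n : ℕ) (a b : ι) :
    (stepMatrix step ^ n) a b = Nat.card (LabelledWalk step n a b) := by
  induction n generalizing a with
  | zero => rw [pow_zero, Matrix.one_apply, LabelledWalk.card_zero]
  | succ n ih =>
    rw [pow_succ', Matrix.mul_apply, Nat.card_congr (LabelledWalk.succEquiv step n a b),
      Nat.card_sigma]
    exact sum_congr rfl fun c _ => by rw [ih, Nat.card_prod]; rfl

end LabelledWalk

section OneFactor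

variable {V : Type*}

/-- `M` is a 1-factor of `G`: a spanning subgraph in which every vertex has degree one. This is the
set of edges of a perfect matching, seen as a graph. -/
def IsOneFactor (G M : SimpleGraph V) : Prop :=
  M ≤ G ∧ ∀ v, (M.neighborSet v).ncard = 1

theorem ncard_neighborSet_eq_one_iff (M : SimpleGraph V) (v : V) :
    (M.neighborSet v).ncard = 1 ↔ ∃! e, e ∈ M.edgeSet ∧ v ∈ e := by
  classical
  have hcard : (M.incidenceSet v).ncard = (M.neighborSet v).ncard :=
    Nat.card_congr (M.incidenceSetEquivNeighborSet v)
  rw [← hcard, Set.ncard_eq_one]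
  simp only [Set.eq_singleton_iff_unique_mem]
  rfl

theorem isPM_iff_isOneFactor {G M : SimpleGraph V} {P : Finset (Sym2 V)}
    (hP : (P : Set (Sym2 V)) = M.edgeSet) : IsPM G P ↔ IsOneFactor G M := by
  simp only [IsPM, IsOneFactor, ncard_neighborSet_eq_one_iff, ← edgeSet_subset_edgeSet, ← hP,
    mem_coe, Set.subset_def]

theorem IsPM.coe_eq_edgeSet_fromEdgeSet {G : SimpleGraph V} {P : Finset (Sym2 V)}
    (hP : IsPM G P) : (P : Set (Sym2 V)) = (fromEdgeSet (P : Set (Sym2 V))).edgeSet :=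
  .symm <| (edgeSet_eq_iff _ _).2
    ⟨rfl, Set.disjoint_left.2 fun e he => G.not_isDiag_of_mem_edgeSet (hP.1 e he)⟩

theorem ncard_isPM_eq_ncard_isOneFactor [Finite V] (G : SimpleGraph V) :
    {P | IsPM G P}.ncard = {M | IsOneFactor G M}.ncard := by
  refine (Set.ncard_congr (fun M _ => M.edgeSet.toFinite.toFinset) ?_ ?_ ?_).symm
  · exact fun M hM => (isPM_iff_isOneFactor (Set.Finite.coe_toFinset _)).2 hM
  · exact fun M N _ _ h => edgeSet_injective (Set.Finite.toFinset_inj.1 h)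
  · intro P hP
    have hedge := hP.coe_eq_edgeSet_fromEdgeSet
    exact ⟨_, (isPM_iff_isOneFactor hedge).1 hP, by simp [← hedge]⟩

end OneFactor

section Layers

variable {V : Type*} {n : ℕ} {G : SimpleGraph V} {M : SimpleGraph (V × Fin n)}

/-- The part of `M` inside layer `j`. -/
def layer (M : SimpleGraph (V × Fin n)) (j : Fin n) : SimpleGraph V :=
  M.comap (·, j)

/-- The vertices whose two copies on the sides of gap `k` are joined in `M`. Gap `k` lies between
the layers `k - 1` and `k`, so the outer gaps `0` and `n` have only one side. -/
def crossing (M : SimpleGraph (V × Fin n)) (k : Fin (n + 1)) : Set V :=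
  {v | ∃ i j : Fin n, i.succ = k ∧ j.castSucc = k ∧ M.Adj (v, i) (v, j)}

/-- The graph with prescribed layers `R` and crossings `C`; the values of `C` at the outer gaps are
ignored. -/
def glue (C : Fin (n + 1) → Set V) (R : Fin n → SimpleGraph V) : SimpleGraph (V × Fin n) where
  Adj x y := (R x.2).Adj x.1 y.1 ∧ x.2 = y.2 ∨
    (x.2.succ = y.2.castSucc ∧ x.1 ∈ C x.2.succ ∨ y.2.succ = x.2.castSucc ∧ x.1 ∈ C y.2.succ) ∧
      x.1 = y.1
  symm := ⟨by
    rintro ⟨v, i⟩ ⟨w, j⟩ (⟨h, rfl : i = j⟩ | ⟨h, rfl : v = w⟩)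
    · exact Or.inl ⟨h.symm, rfl⟩
    · exact Or.inr ⟨h.symm, rfl⟩⟩
  loopless := ⟨by
    rintro ⟨v, j⟩ (⟨h, -⟩ | ⟨⟨h, -⟩ | ⟨h, -⟩, -⟩)
    · exact (R j).irrefl h
    all_goals exact Fin.castSucc_lt_succ.ne' h⟩

theorem crossing_zero (M : SimpleGraph (V × Fin n)) : crossing M 0 = ∅ :=
  Set.eq_empty_of_forall_notMem fun _ ⟨i, _, hi, _⟩ => i.succ_ne_zero hi

theorem crossing_last (M : SimpleGraph (V × Fin n)) : crossing M (Fin.last n) = ∅ :=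
  Set.eq_empty_of_forall_notMem fun _ ⟨_, j, _, hj, _⟩ => j.castSucc_ne_last hj

theorem mem_crossing_succ_iff {v : V} {i j : Fin n} (hij : i.succ = j.castSucc) :
    v ∈ crossing M i.succ ↔ M.Adj (v, i) (v, j) := by
  constructor
  · rintro ⟨i', j', hi, hj, h⟩
    rwa [Fin.succ_injective n hi, Fin.castSucc_injective n (hj.trans hij)] at h
  · exact fun h => ⟨i, j, rfl, hij.symm, h⟩

theorem layer_glue (C : Fin (n + 1) → Set V) (R : Fin n → SimpleGraph V) :
    layer (glue C R) = R := by
  ext j v w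
  have hj : j.succ ≠ j.castSucc := Fin.castSucc_lt_succ.ne'
  simp [layer, glue, hj]

theorem crossing_glue {C : Fin (n + 1) → Set V} (hzero : C 0 = ∅) (hlast : C (Fin.last n) = ∅)
    (R : Fin n → SimpleGraph V) : crossing (glue C R) = C := by
  ext k v
  constructor
  · rintro ⟨i, j, rfl, hij, ⟨-, rfl : i = j⟩ | ⟨⟨-, hv⟩ | ⟨hji, -⟩, -⟩⟩
    · exact absurd hij Fin.castSucc_lt_succ.ne
    · exact hv
    · simp only [Fin.ext_iff, Fin.val_succ, Fin.val_castSucc] at hij hji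
      omega
  · intro hv
    obtain ⟨i, rfl⟩ := Fin.exists_succ_eq.2 (show k ≠ 0 by rintro rfl; simp [hzero] at hv)
    obtain ⟨j, hj⟩ := Fin.exists_castSucc_eq.2 (show i.succ ≠ Fin.last n by
      intro h; simp [h, hlast] at hv)
    exact ⟨i, j, rfl, hj, Or.inr ⟨Or.inl ⟨hj.symm, hv⟩, rfl⟩⟩

theorem glue_crossing_layer (hM : M ≤ G □ pathGraph n) : glue (crossing M) (layer M) = M := by
  ext ⟨v, i⟩ ⟨w, j⟩
  constructor
  · rintro (⟨h, rfl : i = j⟩ | ⟨⟨hij, hv⟩ | ⟨hji, hv⟩, rfl : v = w⟩)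
    · exact h
    · exact (mem_crossing_succ_iff hij).1 hv
    · exact ((mem_crossing_succ_iff hji).1 hv).symm
  · intro h
    rcases hM h with ⟨-, rfl : i = j⟩ | ⟨hij, rfl : v = w⟩
    · exact Or.inl ⟨h, rfl⟩
    · refine Or.inr ⟨(pathGraph_adj_iff_succ_eq_castSucc.1 hij).imp ?_ ?_, rfl⟩
      · exact fun hij => ⟨hij, (mem_crossing_succ_iff hij).2 h⟩
      · exact fun hji => ⟨hji, (mem_crossing_succ_iff hji).2 h.symm⟩

theorem layer_le (hM : M ≤ G □ pathGraph n) (j : Fin n) : layer M j ≤ G :=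
  fun _ _ h => boxProd_adj_left.1 (hM h)

theorem glue_le (C : Fin (n + 1) → Set V) {R : Fin n → SimpleGraph V}
    (hR : ∀ j, R j ≤ G) : glue C R ≤ G □ pathGraph n := by
  rintro ⟨v, i⟩ ⟨w, j⟩ (⟨h, hij⟩ | ⟨h, hvw⟩)
  · exact Or.inl ⟨hR i h, hij⟩
  · exact Or.inr ⟨pathGraph_adj_iff_succ_eq_castSucc.2 (h.imp And.left And.left), hvw⟩

/-- The layers `i` such that `(v, j)` is joined backwards to `(v, i)`; only `j - 1` is possible. -/
def previousLayers (M : SimpleGraph (V × Fin n)) (v : V) (j : Fin n) : Set (Fin n) :=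
  {i | i.succ = j.castSucc ∧ M.Adj (v, i) (v, j)}

/-- The layers `k` such that `(v, j)` is joined forwards to `(v, k)`; only `j + 1` is possible. -/
def nextLayers (M : SimpleGraph (V × Fin n)) (v : V) (j : Fin n) : Set (Fin n) :=
  {k | j.succ = k.castSucc ∧ M.Adj (v, j) (v, k)}

theorem ncard_previousLayers (M : SimpleGraph (V × Fin n)) (v : V) (j : Fin n) :
    (previousLayers M v j).ncard = (crossing M j.castSucc).indicator 1 v := by
  refine ncard_eq_indicator_one_of_subsingleton ?_ ?_
  · exact fun i hi i' hi' => Fin.succ_injective n (hi.1.trans hi'.1.symm)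
  · exact ⟨fun ⟨i, hi, h⟩ => hi ▸ (mem_crossing_succ_iff hi).2 h,
      fun ⟨i, k, hi, hk, h⟩ => ⟨i, hi, Fin.castSucc_injective n hk ▸ h⟩⟩

theorem ncard_nextLayers (M : SimpleGraph (V × Fin n)) (v : V) (j : Fin n) :
    (nextLayers M v j).ncard = (crossing M j.succ).indicator 1 v := by
  refine ncard_eq_indicator_one_of_subsingleton ?_ ?_
  · exact fun k hk k' hk' => Fin.castSucc_injective n (hk.1.symm.trans hk'.1)
  · exact ⟨fun ⟨k, hk, h⟩ => (mem_crossing_succ_iff hk).2 h,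
      fun ⟨i, k, hi, hk, h⟩ => ⟨k, hk.symm, Fin.succ_injective n hi ▸ h⟩⟩

theorem neighborSet_eq_layer_union_previous_union_next (hM : M ≤ G □ pathGraph n) (v : V)
    (j : Fin n) :
    M.neighborSet (v, j) = (·, j) '' (layer M j).neighborSet v ∪
      ((v, ·) '' previousLayers M v j ∪ (v, ·) '' nextLayers M v j) := by
  ext ⟨w, k⟩
  constructor
  · intro h
    rcases hM h with ⟨-, rfl : j = k⟩ | ⟨hjk, rfl : v = w⟩
    · exact Or.inl ⟨w, h, rfl⟩
    · rcases pathGraph_adj_iff_succ_eq_castSucc.1 hjk with hjk | hkj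
      · exact Or.inr (Or.inr ⟨k, ⟨hjk, h⟩, rfl⟩)
      · exact Or.inr (Or.inl ⟨k, ⟨hkj, h.symm⟩, rfl⟩)
  · rintro (⟨w, h, ⟨⟩⟩ | ⟨k, ⟨-, h⟩, ⟨⟩⟩ | ⟨k, ⟨-, h⟩, ⟨⟩⟩)
    exacts [h, h.symm, h]

theorem ncard_neighborSet_eq_layer_add_crossing [Finite V] (hM : M ≤ G □ pathGraph n)
    (v : V) (j : Fin n) :
    (M.neighborSet (v, j)).ncard = ((layer M j).neighborSet v).ncard +
      ((crossing M j.castSucc).indicator 1 v + (crossing M j.succ).indicator 1 v) := by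
  have hprevious_next : Disjoint ((v, ·) '' previousLayers M v j) ((v, ·) '' nextLayers M v j) := by
    rw [Set.disjoint_image_iff (Prod.mk_right_injective v), Set.disjoint_left]
    rintro i ⟨hi, -⟩ ⟨hj, -⟩
    simp only [Fin.ext_iff, Fin.val_succ, Fin.val_castSucc] at hi hj
    omega
  have hlayer : Disjoint ((·, j) '' (layer M j).neighborSet v)
      ((v, ·) '' previousLayers M v j ∪ (v, ·) '' nextLayers M v j) := by
    rw [Set.disjoint_left]
    rintro _ ⟨w, -, rfl⟩ (⟨i, ⟨hi, -⟩, ⟨⟩⟩ | ⟨k, ⟨hk, -⟩, ⟨⟩⟩)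
    exacts [Fin.castSucc_lt_succ.ne' hi, Fin.castSucc_lt_succ.ne' hk]
  rw [neighborSet_eq_layer_union_previous_union_next hM, Set.ncard_union_eq hlayer,
    Set.ncard_union_eq hprevious_next, Set.ncard_image_of_injective _ (Prod.mk_left_injective j),
    Set.ncard_image_of_injective _ (Prod.mk_right_injective v),
    Set.ncard_image_of_injective _ (Prod.mk_right_injective v),
    ncard_previousLayers, ncard_nextLayers]

end Layers

section TransferMatrix

variable {V : Type*}

/-- The condition on a single layer of a perfect matching, where `A` and `B` are the sets of
vertices matched to the previous and to the next layer and `R` is the graph of edges inside the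
layer: each vertex is matched in exactly one of the three ways. -/
def IsLayerStep (G : SimpleGraph V) (A : Set V) (R : SimpleGraph V) (B : Set V) : Prop :=
  R ≤ G ∧ ∀ v, (R.neighborSet v).ncard + (A.indicator 1 v + B.indicator 1 v) = 1

theorem isOneFactor_boxProd_pathGraph_iff [Finite V] {G : SimpleGraph V} {n : ℕ}
    {M : SimpleGraph (V × Fin n)} (hM : M ≤ G □ pathGraph n) :
    IsOneFactor (G □ pathGraph n) M ↔
      ∀ j, IsLayerStep G (crossing M j.castSucc) (layer M j) (crossing M j.succ) := by
  simp only [IsOneFactor, IsLayerStep, hM, true_and, layer_le hM, Prod.forall,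
    ncard_neighborSet_eq_layer_add_crossing hM]
  exact forall_comm

/-- A 1-factor of `G □ pathGraph n` read off layer by layer. -/
def oneFactorEquivLabelledWalk [Finite V] (G : SimpleGraph V) (n : ℕ) :
    {M // IsOneFactor (G □ pathGraph n) M} ≃ LabelledWalk (IsLayerStep G) n ∅ ∅ where
  toFun M := ⟨crossing M.1, layer M.1, crossing_zero _, crossing_last _,
    (isOneFactor_boxProd_pathGraph_iff M.2.1).1 M.2⟩
  invFun x := ⟨glue x.state x.label, by
    refine (isOneFactor_boxProd_pathGraph_iff (glue_le _ fun j => (x.step_label j).1)).2 ?_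
    rw [crossing_glue x.state_zero x.state_last, layer_glue]
    exact x.step_label⟩
  left_inv M := Subtype.ext (glue_crossing_layer M.2.1)
  right_inv x := LabelledWalk.ext (crossing_glue x.state_zero x.state_last _) (layer_glue _ _)

theorem ncard_isPM_boxProd_pathGraph [Fintype V] [DecidableEq (Set V)] (G : SimpleGraph V)
    (n : ℕ) :
    {P | IsPM (G □ pathGraph n) P}.ncard = (stepMatrix (IsLayerStep G) ^ n) ∅ ∅ := by
  rw [ncard_isPM_eq_ncard_isOneFactor, stepMatrix_pow_apply]
  exact Nat.card_congr (oneFactorEquivLabelledWalk G n)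

end TransferMatrix

open Matrix in
theorem transfer_matrix_representation_general {V : Type*} [Finite V] (G : SimpleGraph V) :
    ∃ (M : Matrix (Fin (2 ^ Nat.card V)) (Fin (2 ^ Nat.card V)) ℕ)
      (u w : Fin (2 ^ Nat.card V) → ℕ),
      ∀ n : ℕ, {P | IsPM (G □ pathGraph n) P}.ncard = u ⬝ᵥ (M ^ n).mulVec w := by
  classical
  have := Fintype.ofFinite V
  let e : Set V ≃ Fin (2 ^ Nat.card V) :=
    Fintype.equivFinOfCardEq (by rw [Fintype.card_set, Nat.card_eq_fintype_card])
  refine ⟨reindexAlgEquiv ℕ ℕ e (stepMatrix (IsLayerStep G)), Pi.single (e ∅) 1,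
    Pi.single (e ∅) 1, fun n => ?_⟩
  rw [ncard_isPM_boxProd_pathGraph, ← map_pow, single_one_dotProduct, mulVec_single_one,
    col_apply, coe_reindexAlgEquiv, reindex_apply, submatrix_apply, e.symm_apply_apply]

theorem grid_eq_boxProd (m n : ℕ) : grid m n = pathGraph m □ pathGraph n := by
  ext ⟨a, b⟩ ⟨c, d⟩
  simp only [grid, fromRel_adj, boxProd_adj, pathGraph_adj, Prod.mk.injEq, ne_eq, Fin.ext_iff]
  omega

open Matrix in
/-- The transfer-matrix representation of the domino-tiling counts. -/
theorem transfer_matrix_representation (m : ℕ) (hm : 1 ≤ m) :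
    ∃ (M : Matrix (Fin (2 ^ m)) (Fin (2 ^ m)) ℕ) (u w : Fin (2 ^ m) → ℕ),
      ∀ n : ℕ, 1 ≤ n → T m n = u ⬝ᵥ (M ^ (n - 1)).mulVec w := by
  obtain ⟨M, u, w, hcount⟩ := Nat.card_fin m ▸ transfer_matrix_representation_general (pathGraph m)
  exact ⟨M, u, M *ᵥ w, fun n hn => by
    rw [T, grid_eq_boxProd, hcount, mulVec_mulVec, ← pow_succ, Nat.sub_add_cancel hn]⟩
end

section
/- Let m ≥ 1 and a, b ≥ 1, and let H(a,b) be the weighted graph on vertex set Fin m × Fin (a+b+2) whose horizontal edges are all pairs {(i,j),(i,j+1)} (weight +1) and whose vertical edges are the pairs {(i,j),(i+1,j)} with j ∈ {0,…,a−1} (weight +1) together with the pairs {(i,j),(i+1,j)} with j ∈ {a+1,…,a+b} (weight −1). (H(a,b) is the adjunction G(m,a)G(m,−b).) Then the signed number of perfect matchings of H(a,b) — the sum over perfect matchings of the product of edge weights, i.e., of (−1)^(number of negative vertical edges) — equals the signed number of perfect matchings of H(a−1, b−1). -/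
open Finset

open scoped Classical in
/-- The finset of all perfect matchings of a graph on a finite vertex type. -/
noncomputable def pmFinset {V : Type*} [Fintype V] [DecidableEq V]
    (G : SimpleGraph V) : Finset (Finset (Sym2 V)) :=
  Finset.univ.filter (fun P => IsPM G P)

open scoped Classical in
/-- The number of vertical edges in `P` (edges whose endpoints differ in the
first, i.e. row, coordinate). -/
noncomputable def vert {m n : ℕ} (P : Finset (Sym2 (Fin m × Fin n))) : ℕ :=
  (P.filter (fun e => ∃ p q : Fin m × Fin n, e = s(p, q) ∧ p.1 ≠ q.1)).card

/-- The underlying graph of the signed graph `G(m,-k)`: all horizontal edges, and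
vertical edges only in columns 1 through k (0-indexed). -/
def negGrid (m k : ℕ) : SimpleGraph (Fin m × Fin (k + 2)) :=
  SimpleGraph.fromRel (fun p q =>
    (p.1 = q.1 ∧ (p.2 : ℕ) + 1 = q.2) ∨
    (p.2 = q.2 ∧ (p.1 : ℕ) + 1 = q.1 ∧ 1 ≤ (p.2 : ℕ) ∧ (p.2 : ℕ) ≤ k))

/-- The signed number of matchings `M(G(m,-k))`: every vertical edge has weight -1,
every horizontal edge weight +1. -/
noncomputable def Msigned (m k : ℕ) : ℤ :=
  ∑ P ∈ pmFinset (negGrid m k), (-1 : ℤ) ^ vert P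


/-- The adjunction `H(a,b) = G(m,a)G(m,-b)`: the graph on `Fin m × Fin (a+b+2)`
with all horizontal edges (weight +1), vertical edges of weight +1 in columns
`0,…,a-1`, and vertical edges of weight -1 in columns `a+1,…,a+b` (0-indexed). -/
def adjoinPosNeg (m a b : ℕ) : SimpleGraph (Fin m × Fin (a + b + 2)) :=
  SimpleGraph.fromRel (fun p q =>
    (p.1 = q.1 ∧ (p.2 : ℕ) + 1 = q.2) ∨
    (p.2 = q.2 ∧ (p.1 : ℕ) + 1 = q.1 ∧
      ((p.2 : ℕ) < a ∨ (a + 1 ≤ (p.2 : ℕ) ∧ (p.2 : ℕ) ≤ a + b))))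

open scoped Classical in
/-- The signed matching count of `H(a,b)`: each perfect matching contributes the
product of its edge weights, i.e. `(-1)^(number of negative vertical edges)`,
the negative vertical edges being those in columns `a+1,…,a+b`. -/
noncomputable def signedCount (m a b : ℕ) : ℤ :=
  ∑ P ∈ pmFinset (adjoinPosNeg m a b),
    (-1 : ℤ) ^ (P.filter (fun e => ∃ p q : Fin m × Fin (a + b + 2),
      e = s(p, q) ∧ p.1 ≠ q.1 ∧ a + 1 ≤ (p.2 : ℕ) ∧ (p.2 : ℕ) ≤ a + b)).card

/-!
Let `M_w` be the transfer matrix of a column with vertical edge weights `w`, indexed by the sets of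
vertices matched to the left and to the right. A column without vertical edges has transfer matrix
`M_0`, which is the complementation permutation. Expanding `∏ (w e + w' e)` over a matching colours
its edges with two colours, and this gives `M_w * M_0 * M_w' = M_(w + w')`. Hence a positive column,
the gap and a negative column multiply to `M_v * M_0 * M_(-v) = M_0`, which is again a single gap.
-/

theorem prod_map_range_merge {M : Type*} [Monoid M] {f g : ℕ → M} {k n : ℕ} (hkn : k ≤ n)
    (left : ∀ j < k, g j = f j) (merged : g k = f k * f (k + 1) * f (k + 2))
    (right : ∀ j > k, g j = f (j + 2)) :
    ((List.range (n + 3)).map f).prod = ((List.range (n + 1)).map g).prod := by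
  induction n, hkn using Nat.le_induction with
  | base =>
    have : (List.range k).map g = (List.range k).map f :=
      List.map_congr_left fun j hj ↦ left j (List.mem_range.1 hj)
    simp [List.range_succ, this, merged, mul_assoc]
  | succ n hn ih =>
    rw [List.range_succ (n := n + 3), List.range_succ (n := n + 1)]
    simp [ih, right (n + 1) (by lia)]

section MatchingSum

variable {V W R : Type*} [CommSemiring R]

open scoped Classical in
/-- The perfect matchings of the complete graph with loops on `S`: sets of unordered pairs from `S`
(loops `s(v, v)` included) such that each vertex of `S` lies in exactly one of them. -/
noncomputable def perfectMatchings (S : Finset V) : Finset (Finset (Sym2 V)) :=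
  {P ∈ S.sym2.powerset | ∀ v ∈ S, ∃! e, e ∈ P ∧ v ∈ e}

/-- The weighted number of perfect matchings of `S` (a loop hafnian). A weighted graph is encoded by
a weight function that vanishes off its edges. -/
noncomputable def matchingSum (w : Sym2 V → R) (S : Finset V) : R :=
  ∑ P ∈ perfectMatchings S, ∏ e ∈ P, w e

theorem mem_perfectMatchings {P : Finset (Sym2 V)} {S : Finset V} :
    P ∈ perfectMatchings S ↔
      (∀ e ∈ P, ∀ f ∈ P, ∀ v ∈ e, v ∈ f → e = f) ∧ ∀ v, (∃ e ∈ P, v ∈ e) ↔ v ∈ S := by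
  simp only [perfectMatchings, mem_filter, mem_powerset, subset_iff, mem_sym2_iff]
  constructor
  · rintro ⟨inside, unique⟩
    exact ⟨fun e he f hf v hve hvf ↦ (unique v (inside he v hve)).unique ⟨he, hve⟩ ⟨hf, hvf⟩,
      fun v ↦ ⟨fun ⟨e, he, hv⟩ ↦ inside he v hv, fun hv ↦ (unique v hv).exists⟩⟩
  · rintro ⟨disjoint, cover⟩
    refine ⟨fun e he v hv ↦ (cover v).1 ⟨e, he, hv⟩, fun v hv ↦ ?_⟩
    obtain ⟨e, he, hve⟩ := (cover v).2 hv
    exact ⟨e, ⟨he, hve⟩, fun f hf ↦ disjoint f hf.1 e he v hf.2 hve⟩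

theorem subset_sym2_of_mem_perfectMatchings {P : Finset (Sym2 V)} {S : Finset V}
    (hP : P ∈ perfectMatchings S) : P ⊆ S.sym2 := fun e he ↦
  mem_sym2_iff.2 fun v hv ↦ ((mem_perfectMatchings.1 hP).2 v).1 ⟨e, he, hv⟩

theorem disjoint_of_mem_perfectMatchings {P Q : Finset (Sym2 V)} {S U : Finset V}
    (hP : P ∈ perfectMatchings S) (hQ : Q ∈ perfectMatchings U) (hSU : Disjoint S U) :
    Disjoint P Q := by
  refine disjoint_left.2 fun e heP heQ ↦ ?_
  have hS := mem_sym2_iff.1 (subset_sym2_of_mem_perfectMatchings hP heP) _ e.out_fst_mem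
  have hU := mem_sym2_iff.1 (subset_sym2_of_mem_perfectMatchings hQ heQ) _ e.out_fst_mem
  exact disjoint_left.1 hSU hS hU

theorem perfectMatchings_empty : perfectMatchings (∅ : Finset V) = {∅} := by
  simp [perfectMatchings]

@[simp]
theorem matchingSum_empty (w : Sym2 V → R) : matchingSum w ∅ = 1 := by
  rw [matchingSum, perfectMatchings_empty, sum_singleton, prod_empty]

theorem matchingSum_congr {w w' : Sym2 V → R} {S : Finset V} (h : ∀ e ∈ S.sym2, w e = w' e) :
    matchingSum w S = matchingSum w' S :=
  sum_congr rfl fun _ hP ↦ prod_congr rfl fun e he ↦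
    h e (subset_sym2_of_mem_perfectMatchings hP he)

theorem matchingSum_eq_zero_of_isolated {w : Sym2 V → R} {S : Finset V} {v : V} (hv : v ∈ S)
    (isolated : ∀ u ∈ S, w s(v, u) = 0) : matchingSum w S = 0 := by
  refine sum_eq_zero fun P hP ↦ ?_
  obtain ⟨-, cover⟩ := mem_perfectMatchings.1 hP
  obtain ⟨e, he, u, rfl⟩ := (cover v).2 hv
  exact prod_eq_zero he (isolated u ((cover u).1 ⟨_, he, Sym2.mem_mk_right v u⟩))

theorem matchingSum_zero [DecidableEq V] (S : Finset V) :
    matchingSum (0 : Sym2 V → R) S = if S = ∅ then 1 else 0 := by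
  split_ifs with h
  · rw [h, matchingSum_empty]
  · obtain ⟨v, hv⟩ := nonempty_iff_ne_empty.2 h
    exact matchingSum_eq_zero_of_isolated hv fun _ _ ↦ rfl

theorem map_mem_perfectMatchings (f : V ↪ W) {P : Finset (Sym2 V)} {S : Finset V} :
    P.map f.sym2Map ∈ perfectMatchings (S.map f) ↔ P ∈ perfectMatchings S := by
  have unique_iff (v : V) :
      (∃! e, e ∈ P.map f.sym2Map ∧ f v ∈ e) ↔ ∃! e, e ∈ P ∧ v ∈ e := by
    have mem_iff (e : Sym2 V) : f v ∈ f.sym2Map e ↔ v ∈ e := by simp [Sym2.mem_map]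
    constructor
    · rintro ⟨_, ⟨he, hv⟩, unique⟩
      obtain ⟨e, heP, rfl⟩ := mem_map.1 he
      refine ⟨e, ⟨heP, (mem_iff e).1 hv⟩, fun e' h ↦ f.sym2Map.injective (unique _ ?_)⟩
      exact ⟨mem_map_of_mem _ h.1, (mem_iff e').2 h.2⟩
    · rintro ⟨e, ⟨he, hv⟩, unique⟩
      refine ⟨f.sym2Map e, ⟨mem_map_of_mem _ he, (mem_iff e).2 hv⟩, ?_⟩
      rintro _ ⟨he', hv'⟩
      obtain ⟨e', heP', rfl⟩ := mem_map.1 he'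
      rw [unique e' ⟨heP', (mem_iff e').1 hv'⟩]
  simp only [perfectMatchings, mem_filter, mem_powerset, sym2_map, map_subset_map,
    forall_mem_map, unique_iff]

theorem matchingSum_map (f : V ↪ W) (w : Sym2 W → R) (S : Finset V) :
    matchingSum w (S.map f) = matchingSum (w ∘ Sym2.map f) S := by
  symm
  refine sum_bij (fun P _ ↦ P.map f.sym2Map) (fun P hP ↦ (map_mem_perfectMatchings f).2 hP)
    (fun P _ Q _ h ↦ map_injective _ h) (fun Q hQ ↦ ?_) fun P _ ↦ by simp
  have hQS : Q ⊆ S.sym2.map f.sym2Map := by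
    rw [← sym2_map]
    exact subset_sym2_of_mem_perfectMatchings hQ
  obtain ⟨P, -, rfl⟩ := subset_map_iff.1 hQS
  exact ⟨P, (map_mem_perfectMatchings f).1 hQ, rfl⟩

variable [DecidableEq V] {P Q : Finset (Sym2 V)} {S U : Finset V}

theorem mem_perfectMatchings_of_subset (hP : P ∈ perfectMatchings S) (hQ : Q ⊆ P) :
    Q ∈ perfectMatchings (Q.biUnion Sym2.toFinset) := by
  obtain ⟨disjoint, -⟩ := mem_perfectMatchings.1 hP
  exact mem_perfectMatchings.2
    ⟨fun e he f hf ↦ disjoint e (hQ he) f (hQ hf), fun v ↦ by simp⟩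

theorem biUnion_toFinset_of_mem_perfectMatchings (hP : P ∈ perfectMatchings S) :
    P.biUnion Sym2.toFinset = S := by
  ext v
  simpa using (mem_perfectMatchings.1 hP).2 v

theorem sdiff_mem_perfectMatchings (hP : P ∈ perfectMatchings S) (hQ : Q ⊆ P) :
    P \ Q ∈ perfectMatchings (S \ Q.biUnion Sym2.toFinset) := by
  simp only [mem_perfectMatchings, mem_sdiff, mem_biUnion, Sym2.mem_toFinset] at hP ⊢
  grind

theorem union_mem_perfectMatchings (hP : P ∈ perfectMatchings S) (hQ : Q ∈ perfectMatchings U)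
    (hSU : Disjoint S U) : P ∪ Q ∈ perfectMatchings (S ∪ U) := by
  obtain ⟨disjointP, coverP⟩ := mem_perfectMatchings.1 hP
  obtain ⟨disjointQ, coverQ⟩ := mem_perfectMatchings.1 hQ
  have no_common (e) (he : e ∈ P) (f) (hf : f ∈ Q) (v) (hve : v ∈ e) : v ∉ f := fun hvf ↦
    disjoint_left.1 hSU ((coverP v).1 ⟨e, he, hve⟩) ((coverQ v).1 ⟨f, hf, hvf⟩)
  refine mem_perfectMatchings.2 ⟨?_, fun v ↦ ?_⟩
  · simp only [mem_union]
    grind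
  · simp only [mem_union, or_and_right, exists_or, coverP, coverQ]

-- Expanding each `w e + w' e` two-colours the edges of a perfect matching; the vertices met by the
-- first colour determine the index of summation on the right.
theorem matchingSum_add (w w' : Sym2 V → R) (S : Finset V) :
    matchingSum (w + w') S = ∑ X ∈ S.powerset, matchingSum w X * matchingSum w' (S \ X) := by
  simp only [matchingSum, Pi.add_apply, prod_add, sum_mul_sum, ← sum_product', sum_sigma']
  refine sum_bij' (fun c _ ↦ ⟨c.2.biUnion Sym2.toFinset, c.2, c.1 \ c.2⟩)
    (fun c _ ↦ ⟨c.2.1 ∪ c.2.2, c.2.1⟩) ?_ ?_ ?_ ?_ fun _ _ ↦ rfl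
  · rintro ⟨P, Q⟩ h
    obtain ⟨hP, hQ⟩ : P ∈ perfectMatchings S ∧ Q ⊆ P := by simpa using h
    have hQS : Q.biUnion Sym2.toFinset ⊆ S :=
      biUnion_toFinset_of_mem_perfectMatchings hP ▸ biUnion_subset_biUnion_of_subset_left _ hQ
    simp [mem_perfectMatchings_of_subset hP hQ, sdiff_mem_perfectMatchings hP hQ, hQS]
  · rintro ⟨X, Q, Q'⟩ h
    obtain ⟨hX, hQ, hQ'⟩ :
        X ⊆ S ∧ Q ∈ perfectMatchings X ∧ Q' ∈ perfectMatchings (S \ X) := by simpa using h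
    have hQQ' := union_mem_perfectMatchings hQ hQ' disjoint_sdiff
    rw [union_sdiff_of_subset hX] at hQQ'
    exact mem_sigma.2 ⟨hQQ', mem_powerset.2 subset_union_left⟩
  · rintro ⟨P, Q⟩ h
    have hQ : Q ⊆ P := by simpa using (mem_sigma.1 h).2
    simp [union_sdiff_of_subset hQ]
  · rintro ⟨X, Q, Q'⟩ h
    obtain ⟨-, hQ, hQ'⟩ :
        X ⊆ S ∧ Q ∈ perfectMatchings X ∧ Q' ∈ perfectMatchings (S \ X) := by simpa using h
    have hQQ' := disjoint_of_mem_perfectMatchings hQ hQ' disjoint_sdiff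
    simp [biUnion_toFinset_of_mem_perfectMatchings hQ, union_sdiff_cancel_left hQQ']

theorem singleton_mem_perfectMatchings (v u : V) :
    {s(v, u)} ∈ perfectMatchings ({v, u} : Finset V) := by
  simp [mem_perfectMatchings]

theorem matchingSum_eq_mul_of_leaf {w : Sym2 V → R} {v u : V} (hv : v ∈ S) (hu : u ∈ S)
    (leaf : ∀ x ∈ S, x ≠ u → w s(v, x) = 0) :
    matchingSum w S = w s(v, u) * matchingSum w (S \ {v, u}) := by
  have hvu : ({v, u} : Finset V) ⊆ S := by simp [insert_subset_iff, hv, hu]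
  have disjoint_edge {P} (hP : P ∈ perfectMatchings (S \ {v, u})) : Disjoint {s(v, u)} P :=
    disjoint_of_mem_perfectMatchings (singleton_mem_perfectMatchings v u) hP disjoint_sdiff
  rw [matchingSum, matchingSum, mul_sum]
  symm
  refine sum_of_injOn (fun P ↦ {s(v, u)} ∪ P) ?_ ?_ ?_ ?_
  · intro P hP Q hQ hPQ
    rw [← union_sdiff_cancel_left (disjoint_edge hP), ← union_sdiff_cancel_left (disjoint_edge hQ)]
    exact congrArg (· \ {s(v, u)}) hPQ
  · intro P hP
    have h := union_mem_perfectMatchings (singleton_mem_perfectMatchings v u) hP disjoint_sdiff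
    rwa [union_sdiff_of_subset hvu] at h
  · intro P hP not_insert
    by_cases he : s(v, u) ∈ P
    · have rest := sdiff_mem_perfectMatchings hP (singleton_subset_iff.2 he)
      rw [singleton_biUnion, Sym2.toFinset_mk_eq] at rest
      exact absurd ⟨_, rest, union_sdiff_of_subset (singleton_subset_iff.2 he)⟩ not_insert
    · obtain ⟨-, cover⟩ := mem_perfectMatchings.1 hP
      obtain ⟨e, heP, x, rfl⟩ := (cover v).2 hv
      refine prod_eq_zero heP (leaf x ((cover x).1 ⟨_, heP, Sym2.mem_mk_right v x⟩) ?_)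
      rintro rfl
      exact he heP
  · intro P hP
    rw [prod_union (disjoint_edge hP), prod_singleton]

end MatchingSum

section TransferMatrix

variable {ι R : Type*} [Fintype ι] [DecidableEq ι] [CommSemiring R]

/-- The transfer matrix of a column with vertical weights `w`: the entry at `(S, U)` is the weighted
number of ways to complete the column by vertical edges when its vertices in `S` are matched to the
left and those in `U` to the right. -/
noncomputable def transferMatrix (w : Sym2 ι → R) : Matrix (Finset ι) (Finset ι) R :=
  Matrix.of fun S U ↦ if Disjoint S U then matchingSum w (S ∪ U)ᶜ else 0

theorem transferMatrix_apply (w : Sym2 ι → R) (S U : Finset ι) :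
    transferMatrix w S U = if Disjoint S U then matchingSum w (S ∪ U)ᶜ else 0 := rfl

theorem transferMatrix_zero_apply (S U : Finset ι) :
    transferMatrix (0 : Sym2 ι → R) S U = if S = Uᶜ then 1 else 0 := by
  have eq_compl_iff : S = Uᶜ ↔ Disjoint S U ∧ (S ∪ U)ᶜ = ∅ := by
    rw [compl_eq_empty_iff, eq_compl_iff_isCompl, isCompl_iff, codisjoint_iff, sup_eq_union,
      top_eq_univ]
  simp only [transferMatrix_apply, matchingSum_zero, ← ite_and, eq_compl_iff]

theorem transferMatrix_mul_zero_mul_apply (w w' : Sym2 ι → R) (S U : Finset ι) :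
    (transferMatrix w * transferMatrix 0 * transferMatrix w' : Matrix _ _ R) S U =
      ∑ X, transferMatrix w S Xᶜ * transferMatrix w' X U := by
  simp [Matrix.mul_apply, transferMatrix_zero_apply]

theorem transferMatrix_mul_zero_mul (w w' : Sym2 ι → R) :
    transferMatrix w * transferMatrix 0 * transferMatrix w' = transferMatrix (w + w') := by
  ext S U
  rw [transferMatrix_mul_zero_mul_apply, transferMatrix_apply]
  have entry_eq_zero {X : Finset ι} (hX : ¬(S ⊆ X ∧ Disjoint X U)) :
      transferMatrix w S Xᶜ * transferMatrix w' X U = 0 := by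
    simp only [transferMatrix_apply, ← subset_compl_iff_disjoint_right, compl_compl] at hX ⊢
    grind
  split_ifs with hSU
  · rw [matchingSum_add]
    symm
    refine sum_of_injOn (S ∪ ·) ?_ (fun _ _ ↦ mem_coe.2 (mem_univ _)) (fun X _ hX ↦ ?_)
      fun Y hY ↦ ?_
    · intro Y hY Z hZ (hYZ : S ∪ Y = S ∪ Z)
      simp only [coe_powerset, Set.mem_preimage, Set.mem_powerset_iff, coe_subset,
        subset_compl_iff_disjoint_right, disjoint_union_right] at hY hZ
      rw [← union_sdiff_cancel_left hY.1.symm, hYZ, union_sdiff_cancel_left hZ.1.symm]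
    · refine entry_eq_zero fun ⟨hSX, hXU⟩ ↦ hX ⟨X \ S, ?_, union_sdiff_of_subset hSX⟩
      rw [mem_coe, mem_powerset, subset_compl_iff_disjoint_right, disjoint_union_right]
      exact ⟨sdiff_disjoint, hXU.mono_left sdiff_subset⟩
    · rw [mem_powerset, subset_compl_iff_disjoint_right, disjoint_union_right] at hY
      have left : Disjoint S (S ∪ Y)ᶜ := disjoint_compl_right.mono_left subset_union_left
      have right : Disjoint (S ∪ Y) U := disjoint_union_left.2 ⟨hSU, hY.2⟩
      have left_rest : (S ∪ (S ∪ Y)ᶜ)ᶜ = Y := by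
        rw [compl_union, compl_compl, inter_comm, ← sdiff_eq_inter_compl,
          union_sdiff_cancel_left hY.1.symm]
      have right_rest : (S ∪ U)ᶜ \ Y = (S ∪ Y ∪ U)ᶜ := by
        rw [sdiff_eq_inter_compl, ← compl_union, union_right_comm]
      rw [transferMatrix_apply, transferMatrix_apply, if_pos left, if_pos right, left_rest,
        right_rest]
  · exact sum_eq_zero fun X _ ↦ entry_eq_zero fun ⟨hSX, hXU⟩ ↦ hSU (hXU.mono_left hSX)

end TransferMatrix

section LayeredWeight

variable {ι R : Type*}

/-- The edges on `ι × ℕ` inside the columns `0, …, n`. -/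
def edgesUpTo (ι : Type*) (n : ℕ) : Set (Sym2 (ι × ℕ)) := {e | ∀ p ∈ e, p.2 ≤ n}

theorem mk_mem_edgesUpTo {n : ℕ} {p q : ι × ℕ} :
    s(p, q) ∈ edgesUpTo ι n ↔ p.2 ≤ n ∧ q.2 ≤ n := by
  simp only [edgesUpTo, Set.mem_ofPred_eq, Sym2.mem_iff, forall_eq_or_imp, forall_eq]

variable [DecidableEq ι] [CommSemiring R]

/-- The weight function on `ι × ℕ` of a layered graph: weights `c j` inside the column `ι × {j}`,
and an edge of weight `1` between each vertex and its neighbour in the next column. -/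
def layeredWeight (c : ℕ → Sym2 ι → R) : Sym2 (ι × ℕ) → R :=
  Sym2.lift ⟨fun p q ↦
    if p.2 = q.2 then c p.2 s(p.1, q.1)
    else if p.1 = q.1 ∧ (p.2 + 1 = q.2 ∨ q.2 + 1 = p.2) then 1 else 0,
    fun p q ↦ by grind [Sym2.eq_swap]⟩

theorem layeredWeight_mk (c : ℕ → Sym2 ι → R) (p q : ι × ℕ) :
    layeredWeight c s(p, q) =
      if p.2 = q.2 then c p.2 s(p.1, q.1)
      else if p.1 = q.1 ∧ (p.2 + 1 = q.2 ∨ q.2 + 1 = p.2) then 1 else 0 := rfl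

theorem matchingSum_layeredWeight_column (c : ℕ → Sym2 ι → R) (n : ℕ) (U : Finset ι) :
    matchingSum (layeredWeight c) (U ×ˢ {n}) = matchingSum (c n) U := by
  rw [product_singleton, matchingSum_map]
  refine matchingSum_congr fun e _ ↦ ?_
  induction e with | _ i j
  simp [layeredWeight_mk]

theorem indicator_compl_edgesUpTo_layeredWeight (c : ℕ → Sym2 ι → R) {n : ℕ} {p q : ι × ℕ}
    (hp : p.2 ≤ n) (hq : q.2 ≤ n + 1) :
    (edgesUpTo ι n)ᶜ.indicator (layeredWeight c) s(p, q) =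
      if p.2 = n ∧ q = (p.1, n + 1) then 1 else 0 := by
  classical
  simp only [Set.indicator_apply, Set.mem_compl_iff, mk_mem_edgesUpTo, layeredWeight_mk]
  grind

theorem matchingSum_compl_edgesUpTo (c : ℕ → Sym2 ι → R) (n : ℕ) (S U : Finset ι) :
    matchingSum ((edgesUpTo ι n)ᶜ.indicator (layeredWeight c)) (S ×ˢ {n} ∪ U ×ˢ {n + 1}) =
      if S ⊆ U then matchingSum (c (n + 1)) (U \ S) else 0 := by
  induction S using Finset.induction generalizing U with
  | empty =>
    rw [empty_product, empty_union, if_pos (empty_subset _), sdiff_empty,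
      ← matchingSum_layeredWeight_column c (n + 1)]
    refine matchingSum_congr fun e he ↦ Set.indicator_of_mem (fun hn ↦ ?_) _
    have := hn _ e.out_fst_mem
    have := mem_sym2_iff.1 he _ e.out_fst_mem
    grind
  | insert s S hs ih =>
    have neighbour {q} (hq : q ∈ insert s S ×ˢ {n} ∪ U ×ˢ {n + 1}) :
        (edgesUpTo ι n)ᶜ.indicator (layeredWeight c) s((s, n), q) =
          if q = (s, n + 1) then 1 else 0 := by
      have hqn : q.2 ≤ n + 1 := by grind
      simp [indicator_compl_edgesUpTo_layeredWeight c (p := (s, n)) le_rfl hqn]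
    have hsn : (s, n) ∈ insert s S ×ˢ {n} ∪ U ×ˢ {n + 1} := by simp
    by_cases hsU : s ∈ U
    · have hsn' : (s, n + 1) ∈ insert s S ×ˢ {n} ∪ U ×ˢ {n + 1} := by simp [hsU]
      have rest : (insert s S ×ˢ {n} ∪ U ×ˢ {n + 1}) \ {(s, n), (s, n + 1)} =
          S ×ˢ {n} ∪ U.erase s ×ˢ {n + 1} := by
        ext ⟨i, j⟩
        grind
      have subset_iff : S ⊆ U.erase s ↔ insert s S ⊆ U := by grind
      rw [matchingSum_eq_mul_of_leaf hsn hsn' fun q hq hne ↦ by rw [neighbour hq, if_neg hne],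
        neighbour hsn', if_pos rfl, one_mul, rest, ih, erase_sdiff_comm, ← sdiff_insert]
      simp only [subset_iff]
    · rw [if_neg fun h ↦ hsU (h (mem_insert_self s S))]
      refine matchingSum_eq_zero_of_isolated hsn fun q hq ↦ ?_
      rw [neighbour hq, if_neg (by grind)]

variable [Fintype ι]

/-- All of the columns `0, …, n - 1` together with the vertices `U` of column `n`. -/
def partialGrid (n : ℕ) (U : Finset ι) : Finset (ι × ℕ) := univ ×ˢ range n ∪ U ×ˢ {n}

theorem mem_partialGrid {n : ℕ} {U : Finset ι} {p : ι × ℕ} :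
    p ∈ partialGrid n U ↔ p.2 < n ∨ p.1 ∈ U ∧ p.2 = n := by
  simp [partialGrid, -product_singleton]

theorem partialGrid_univ (n : ℕ) : partialGrid n (univ : Finset ι) = univ ×ˢ range (n + 1) := by
  ext p
  simp only [mem_partialGrid, mem_univ, true_and, mem_product, mem_range]
  lia

theorem eq_partialGrid_of_matchingSum_mul_ne_zero {c : ℕ → Sym2 ι → R} {n : ℕ} {U : Finset ι}
    {X : Finset (ι × ℕ)}
    (ne_zero : matchingSum ((edgesUpTo ι n).indicator (layeredWeight c)) X *
      matchingSum ((edgesUpTo ι n)ᶜ.indicator (layeredWeight c)) (partialGrid (n + 1) U \ X) ≠ 0) :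
    ∃ S, X = partialGrid n S := by
  have le_of_mem {p} (hp : p ∈ X) : p.2 ≤ n := by
    by_contra! hpn
    refine left_ne_zero_of_mul ne_zero (matchingSum_eq_zero_of_isolated hp fun q _ ↦ ?_)
    exact Set.indicator_of_notMem (fun h ↦ hpn.not_ge (mk_mem_edgesUpTo.1 h).1) _
  have mem_of_lt {p : ι × ℕ} (hp : p.2 < n) : p ∈ X := by
    by_contra hpX
    have hp' : p ∈ partialGrid (n + 1) U \ X :=
      mem_sdiff.2 ⟨mem_partialGrid.2 (.inl (by lia)), hpX⟩
    refine right_ne_zero_of_mul ne_zero (matchingSum_eq_zero_of_isolated hp' fun q hq ↦ ?_)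
    have hqn : q.2 ≤ n + 1 := by
      have := mem_partialGrid.1 (mem_sdiff.1 hq).1
      lia
    rw [indicator_compl_edgesUpTo_layeredWeight c hp.le hqn, if_neg fun h ↦ hp.ne h.1]
  refine ⟨({i | (i, n) ∈ X} : Finset ι), ?_⟩
  ext ⟨i, j⟩
  rw [mem_partialGrid, mem_filter_univ]
  grind

theorem matchingSum_partialGrid_succ (c : ℕ → Sym2 ι → R) (n : ℕ) (U : Finset ι) :
    matchingSum (layeredWeight c) (partialGrid (n + 1) Uᶜ) =
      ∑ S, matchingSum (layeredWeight c) (partialGrid n Sᶜ) * transferMatrix (c (n + 1)) S U := by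
  conv_lhs => rw [← Set.indicator_self_add_compl (edgesUpTo ι n) (layeredWeight c), matchingSum_add]
  symm
  refine sum_of_injOn (fun S ↦ partialGrid n Sᶜ) ?_ ?_ (fun X _ not_partial ↦ ?_) fun S _ ↦ ?_
  · intro S _ S' _ h
    ext i
    simpa [mem_partialGrid, not_iff_not] using congrArg ((i, n) ∈ ·) h
  · intro S _
    rw [mem_coe, mem_powerset]
    intro p
    simp only [mem_partialGrid]
    grind
  · by_contra ne_zero
    obtain ⟨S, rfl⟩ := eq_partialGrid_of_matchingSum_mul_ne_zero ne_zero
    exact not_partial ⟨Sᶜ, mem_coe.2 (mem_univ _), congrArg _ (compl_compl S)⟩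
  · have inside : matchingSum ((edgesUpTo ι n).indicator (layeredWeight c)) (partialGrid n Sᶜ) =
        matchingSum (layeredWeight c) (partialGrid n Sᶜ) := by
      refine matchingSum_congr fun e he ↦ Set.indicator_of_mem (fun p hp ↦ ?_) _
      have := mem_partialGrid.1 (mem_sym2_iff.1 he p hp)
      grind
    have outside : partialGrid (n + 1) Uᶜ \ partialGrid n Sᶜ = S ×ˢ {n} ∪ Uᶜ ×ˢ {n + 1} := by
      ext p
      simp only [mem_sdiff, mem_partialGrid, mem_union, mem_product, mem_singleton, mem_compl]
      grind
    have unmatched : Uᶜ \ S = (S ∪ U)ᶜ := by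
      rw [sdiff_eq_inter_compl, ← compl_union, union_comm]
    simp only [inside, outside, matchingSum_compl_edgesUpTo, transferMatrix_apply,
      subset_compl_iff_disjoint_right, unmatched]

theorem matchingSum_partialGrid_eq_prod (c : ℕ → Sym2 ι → R) (n : ℕ) (U : Finset ι) :
    matchingSum (layeredWeight c) (partialGrid n Uᶜ) =
      ((List.range (n + 1)).map (transferMatrix ∘ c)).prod ∅ U := by
  induction n generalizing U with
  | zero =>
    simp [transferMatrix_apply, ← matchingSum_layeredWeight_column c, partialGrid]
  | succ n ih =>
    rw [matchingSum_partialGrid_succ, List.range_succ, List.map_append, List.prod_append,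
      Matrix.mul_apply]
    simp [ih]

theorem matchingSum_layeredWeight_grid (c : ℕ → Sym2 ι → R) (n : ℕ) :
    matchingSum (layeredWeight c) (univ ×ˢ range (n + 1)) =
      ((List.range (n + 1)).map (transferMatrix ∘ c)).prod ∅ ∅ := by
  rw [← partialGrid_univ, ← compl_empty, matchingSum_partialGrid_eq_prod]

theorem matchingSum_layeredWeight_merge {c c' : ℕ → Sym2 ι → R} {k n : ℕ} (hkn : k ≤ n)
    (left : ∀ j < k, c' j = c j) (merged : c' k = c k + c (k + 2)) (gap : c (k + 1) = 0)
    (right : ∀ j > k, c' j = c (j + 2)) :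
    matchingSum (layeredWeight c) (univ ×ˢ range (n + 3)) =
      matchingSum (layeredWeight c') (univ ×ˢ range (n + 1)) := by
  rw [matchingSum_layeredWeight_grid, matchingSum_layeredWeight_grid]
  have three_columns : transferMatrix (c' k) =
      transferMatrix (c k) * transferMatrix (c (k + 1)) * transferMatrix (c (k + 2)) := by
    rw [gap, transferMatrix_mul_zero_mul, merged]
  exact congrArg (fun M : Matrix _ _ R ↦ M ∅ ∅) (prod_map_range_merge hkn
    (fun j hj ↦ congrArg transferMatrix (left j hj)) three_columns
    fun j hj ↦ congrArg transferMatrix (right j hj))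

end LayeredWeight

section SignedColumns

variable {ι R : Type*} [Fintype ι] [DecidableEq ι] [CommRing R]

/-- The column weights of the adjunction of `a` columns of vertical weight `v` to `b` columns of
vertical weight `-v`, the latter flanked by two columns without vertical edges, at positions `a` and
`a + b + 1`. -/
def signedColumns (v : Sym2 ι → R) (a b : ℕ) (j : ℕ) : Sym2 ι → R :=
  if j < a then v else if a < j ∧ j ≤ a + b then -v else 0

theorem adjunction_pos_neg_step_general (v : Sym2 ι → R) (a b : ℕ) :
    matchingSum (layeredWeight (signedColumns v (a + 1) (b + 1)))
        (univ ×ˢ range (a + 1 + (b + 1) + 2)) =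
      matchingSum (layeredWeight (signedColumns v a b)) (univ ×ˢ range (a + b + 2)) := by
  rw [show a + 1 + (b + 1) + 2 = a + b + 1 + 3 by lia]
  apply matchingSum_layeredWeight_merge (k := a) (by lia) <;> simp only [signedColumns] <;> grind

end SignedColumns

section SignedCount

variable {V : Type*} [Fintype V] [DecidableEq V]

theorem mem_pmFinset {G : SimpleGraph V} {P : Finset (Sym2 V)} :
    P ∈ pmFinset G ↔ P ∈ perfectMatchings univ ∧ ∀ e ∈ P, e ∈ G.edgeSet := by
  simp only [pmFinset, mem_filter_univ]
  simp [IsPM, perfectMatchings, and_comm (b := ∀ e ∈ P, e ∈ G.edgeSet)]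

theorem sum_pmFinset_prod_eq_matchingSum {R : Type*} [CommSemiring R] (G : SimpleGraph V)
    (w : Sym2 V → R) :
    ∑ P ∈ pmFinset G, ∏ e ∈ P, w e = matchingSum (G.edgeSet.indicator w) univ := by
  refine sum_subset_zero_on_sdiff (fun P hP ↦ (mem_pmFinset.1 hP).1) (fun P hP ↦ ?_)
    fun P hP ↦ prod_congr rfl fun e he ↦
      (Set.indicator_of_mem ((mem_pmFinset.1 hP).2 e he) w).symm
  obtain ⟨hP, hG⟩ := mem_sdiff.1 hP
  obtain ⟨e, he, heG⟩ : ∃ e ∈ P, e ∉ G.edgeSet := by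
    simpa [mem_pmFinset, hP] using hG
  exact prod_eq_zero he (Set.indicator_of_notMem heG w)

theorem adjoinPosNeg_adj {m a b : ℕ} {p q : Fin m × Fin (a + b + 2)} :
    (adjoinPosNeg m a b).Adj p q ↔
      p.1 = q.1 ∧ ((p.2 : ℕ) + 1 = q.2 ∨ (q.2 : ℕ) + 1 = p.2) ∨
      p.2 = q.2 ∧ (SimpleGraph.pathGraph m).Adj p.1 q.1 ∧
        ((p.2 : ℕ) < a ∨ a + 1 ≤ (p.2 : ℕ) ∧ (p.2 : ℕ) ≤ a + b) := by
  rw [adjoinPosNeg, SimpleGraph.fromRel_adj, SimpleGraph.pathGraph_adj]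
  grind

theorem signedCount_eq_matchingSum (m a b : ℕ) :
    signedCount m a b =
      matchingSum
        (layeredWeight (signedColumns ((SimpleGraph.pathGraph m).edgeSet.indicator 1) a b))
        (univ ×ˢ range (a + b + 2)) := by
  classical
  let embed : Fin m × Fin (a + b + 2) ↪ Fin m × ℕ :=
    (Function.Embedding.refl _).prodMap Fin.valEmbedding
  have map_univ : univ.map embed = univ ×ˢ range (a + b + 2) := by
    ext ⟨i, j⟩
    simp [embed, Fin.exists_iff]
  rw [← map_univ, matchingSum_map, signedCount]
  simp only [← prod_const, prod_filter]
  rw [sum_pmFinset_prod_eq_matchingSum]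
  refine matchingSum_congr fun e _ ↦ ?_
  induction e with | _ p q
  have negative_iff : (∃ p' q', s(p, q) = s(p', q') ∧ p'.1 ≠ q'.1 ∧
      a + 1 ≤ (p'.2 : ℕ) ∧ (p'.2 : ℕ) ≤ a + b) ↔ p.1 ≠ q.1 ∧
      (a + 1 ≤ (p.2 : ℕ) ∧ (p.2 : ℕ) ≤ a + b ∨ a + 1 ≤ (q.2 : ℕ) ∧ (q.2 : ℕ) ≤ a + b) := by
    simp only [Sym2.eq_iff]
    grind
  have ne_of_adj := (SimpleGraph.pathGraph m).ne_of_adj (a := p.1) (b := q.1)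
  have embed_apply (x) : embed x = (x.1, ↑x.2) := rfl
  simp only [Function.comp_apply, Sym2.map_mk, embed_apply, layeredWeight_mk, Set.indicator_apply,
    SimpleGraph.mem_edgeSet, adjoinPosNeg_adj, signedColumns, negative_iff,
    ite_apply, Pi.neg_apply, Pi.zero_apply, Pi.one_apply]
  grind

end SignedCount

/-- The signed matching count of `G(m,a)G(m,-b)` equals that of
`G(m,a-1)G(m,-(b-1))`. -/
theorem adjunction_pos_neg_step (m a b : ℕ) (hm : 1 ≤ m) (ha : 1 ≤ a) (hb : 1 ≤ b) :
    signedCount m a b = signedCount m (a - 1) (b - 1) := by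
  obtain ⟨a, rfl⟩ := Nat.exists_eq_add_of_le' ha
  obtain ⟨b, rfl⟩ := Nat.exists_eq_add_of_le' hb
  simp only [signedCount_eq_matchingSum, adjunction_pos_neg_step_general, Nat.add_sub_cancel]
end
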